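/- arXiv:2506.03650 — 2 statements merged into one kernel-verified Lean document; each statement's English description precedes it below -/
import Mathlib

section
/- Let n_θ be a positive integer and T_f > 0. For each h > 0 such that T_f/h is a positive integer, set N_h = T_f/h + 1, and suppose we are given a matrix Φ_h ∈ ℝ^{N_h × n_θ} with Φ_h⊤Φ_h invertible and a positive semidefinite matrix Σ_h ∈ ℝ^{N_h × N_h}. Assume: (A1) there exists a positive definite matrix R ∈ ℝ^{n_θ × n_θ} such that (h/T_f)·Φ_h⊤Φ_h → R as h → 0 (along the admissible values of h); and (A2) there exists M > 0 such that Tr(Σ_h) ≤ M for all admissible h. Then Tr((Φ_h⊤Φ_h)^{-1} Φ_h⊤ Σ_h Φ_h (Φ_h⊤Φ_h)^{-1}) = O(h) as h → 0, i.e., there exist constants C > 0 and h₀ > 0 such that Tr((Φ_h⊤Φ_h)^{-1} Φ_h⊤ Σ_h Φ_h (Φ_h⊤Φ_h)^{-1}) ≤ C·h for all admissible h ≤ h₀. -/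
open Matrix Filter Topology

/-!
The covariance is `Pᴴ Σ P` with `P = Φ (ΦᴴΦ)⁻¹`, and `Pᴴ P = (ΦᴴΦ)⁻¹`. Writing `Σ = Bᴴ B`,
submultiplicativity of the Frobenius norm, `‖B P‖² ≤ ‖B‖² ‖P‖²`, says
`tr (Pᴴ Σ P) ≤ tr Σ · tr (ΦᴴΦ)⁻¹`. If `c • ΦᴴΦ` converges to an invertible matrix, then
so does its inverse, and `(ΦᴴΦ)⁻¹` is `c` times that inverse, so `tr (ΦᴴΦ)⁻¹ = O(c)`.
-/

section Trace

open scoped ComplexOrder MatrixOrder Matrix.Norms.Frobenius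

variable {𝕜 ι κ : Type*} [RCLike 𝕜] [Fintype ι] [Fintype κ]

theorem norm_trace_conjTranspose_mul_self_eq_sq_frobenius_norm (A : Matrix ι κ 𝕜) :
    ‖(Aᴴ * A).trace‖ = ‖A‖ ^ 2 := by
  have htrace : (Aᴴ * A).trace = ((∑ j, ∑ i, ‖A i j‖ ^ 2 : ℝ) : 𝕜) := by
    simp [trace, mul_apply, RCLike.conj_mul]
  have hnonneg : 0 ≤ ∑ j, ∑ i, ‖A i j‖ ^ 2 := by positivity
  rw [htrace, RCLike.norm_of_nonneg hnonneg, Finset.sum_comm, frobenius_norm_def,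
    ← Real.sqrt_eq_rpow, Real.sq_sqrt (by positivity)]
  simp only [Real.rpow_ofNat]

theorem norm_trace_conjTranspose_mul_mul_le {S : Matrix ι ι 𝕜} (hS : S.PosSemidef)
    (P : Matrix ι κ 𝕜) : ‖(Pᴴ * S * P).trace‖ ≤ ‖S.trace‖ * ‖(Pᴴ * P).trace‖ := by
  classical
  obtain ⟨B, rfl⟩ : ∃ B : Matrix ι ι 𝕜, S = Bᴴ * B :=
    CStarAlgebra.nonneg_iff_eq_star_mul_self.mp hS.nonneg
  have hgram : Pᴴ * (Bᴴ * B) * P = (B * P)ᴴ * (B * P) := by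
    simp only [conjTranspose_mul, Matrix.mul_assoc]
  rw [hgram]
  simp only [norm_trace_conjTranspose_mul_self_eq_sq_frobenius_norm, ← mul_pow]
  gcongr
  exact frobenius_norm_mul B P

end Trace

section Inverse

variable {α κ : Type*} [Fintype κ] [DecidableEq κ]

theorem mul_smul_inv_smul {K : Type*} [CommRing K] {c : K} {A : Matrix κ κ K}
    (h : IsUnit (c • A)) : A * (c • (c • A)⁻¹) = 1 := by
  rw [Matrix.mul_smul, ← Matrix.smul_mul,
    mul_nonsing_inv _ ((isUnit_iff_isUnit_det _).mp h)]

theorem eventually_isUnit_of_tendsto {K : Type*} [Field K] [TopologicalSpace K]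
    [IsTopologicalRing K] [T1Space K] {l : Filter α} {A : α → Matrix κ κ K} {R : Matrix κ κ K}
    (hR : IsUnit R) (hA : Tendsto A l (𝓝 R)) : ∀ᶠ a in l, IsUnit (A a) := by
  have hdet : Tendsto (fun a => (A a).det) l (𝓝 R.det) :=
    (continuous_id.matrix_det.tendsto R).comp hA
  filter_upwards [hdet.eventually_ne ((isUnit_iff_isUnit_det R).mp hR).ne_zero] with a ha
  exact (isUnit_iff_isUnit_det _).mpr ha.isUnit

theorem isBigO_trace_inv_of_tendsto_smul {𝕜 : Type*} [NormedField 𝕜] {l : Filter α} {c : α → 𝕜}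
    {A : α → Matrix κ κ 𝕜} {R : Matrix κ κ 𝕜} (hR : IsUnit R)
    (hA : Tendsto (fun a => c a • A a) l (𝓝 R)) : (fun a => (A a)⁻¹.trace) =O[l] c := by
  have hdet : R.det ≠ 0 := ((isUnit_iff_isUnit_det R).mp hR).ne_zero
  have hinv : ContinuousAt Inv.inv R :=
    continuousAt_matrix_inv R (by
      simpa only [Ring.inverse_eq_inv'] using continuousAt_inv₀ hdet)
  have htrace : Tendsto (fun a => (c a • A a)⁻¹.trace) l (𝓝 R⁻¹.trace) :=
    (continuous_id.matrix_trace.tendsto R⁻¹).comp (hinv.tendsto.comp hA)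
  have hbound : (fun a => c a * (c a • A a)⁻¹.trace) =O[l] c := by
    simpa only [mul_one] using (Asymptotics.isBigO_refl c l).mul (htrace.isBigO_one 𝕜)
  refine hbound.congr' ?_ .rfl
  filter_upwards [eventually_isUnit_of_tendsto hR hA] with a ha
  rw [inv_eq_right_inv (mul_smul_inv_smul ha), trace_smul, smul_eq_mul]

end Inverse

section LeastSquares

variable {K ι κ : Type*} [CommRing K] [StarRing K] [Fintype ι] [Fintype κ]
  [DecidableEq κ]

/-- The covariance matrix of the least-squares estimator `(ΦᴴΦ)⁻¹ Φᴴ Y` in the linear model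
`Y = Φ θ + V` whose noise `V` has mean zero and covariance `S`. It is meaningful only for
invertible `ΦᴴΦ`, and it is `0` otherwise. -/
noncomputable def leastSquaresCov (Φ : Matrix ι κ K) (S : Matrix ι ι K) : Matrix κ κ K :=
  (Φᴴ * Φ)⁻¹ * Φᴴ * S * Φ * (Φᴴ * Φ)⁻¹

theorem leastSquaresCov_eq_conjTranspose_mul_mul (Φ : Matrix ι κ K) (S : Matrix ι ι K) :
    leastSquaresCov Φ S = (Φ * (Φᴴ * Φ)⁻¹)ᴴ * S * (Φ * (Φᴴ * Φ)⁻¹) := by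
  rw [leastSquaresCov, conjTranspose_mul, (isHermitian_conjTranspose_mul_self Φ).inv.eq]
  simp only [Matrix.mul_assoc]

theorem leastSquaresCov_one [DecidableEq ι] {Φ : Matrix ι κ K} (hΦ : IsUnit (Φᴴ * Φ)) :
    leastSquaresCov Φ 1 = (Φᴴ * Φ)⁻¹ := by
  rw [leastSquaresCov, Matrix.mul_one, Matrix.mul_assoc _ Φᴴ Φ,
    nonsing_inv_mul _ ((isUnit_iff_isUnit_det _).mp hΦ), Matrix.one_mul]

open scoped ComplexOrder in
theorem norm_trace_leastSquaresCov_le {𝕜 : Type*} [RCLike 𝕜] {Φ : Matrix ι κ 𝕜}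
    (hΦ : IsUnit (Φᴴ * Φ)) {S : Matrix ι ι 𝕜} (hS : S.PosSemidef) :
    ‖(leastSquaresCov Φ S).trace‖ ≤ ‖S.trace‖ * ‖(Φᴴ * Φ)⁻¹.trace‖ := by
  classical
  -- `Pᴴ * P` is itself a covariance `Pᴴ * S * P`, for the noise covariance `S = 1`.
  have h := norm_trace_conjTranspose_mul_mul_le hS (Φ * (Φᴴ * Φ)⁻¹)
  rwa [← leastSquaresCov_eq_conjTranspose_mul_mul, ← Matrix.mul_one (Φ * (Φᴴ * Φ)⁻¹)ᴴ,
    ← leastSquaresCov_eq_conjTranspose_mul_mul, leastSquaresCov_one hΦ] at h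

end LeastSquares

theorem exists_forall_le_mul_div_of_isBigO {T : ℝ} (hT : 0 < T) {f : ℕ+ → ℝ}
    (hf : f =O[atTop] fun m : ℕ+ => T / (m : ℝ)) :
    ∃ C > (0 : ℝ), ∃ h₀ > (0 : ℝ), ∀ m : ℕ+, T / (m : ℝ) ≤ h₀ → f m ≤ C * (T / (m : ℝ)) := by
  obtain ⟨C, hC, hbound⟩ := hf.exists_pos
  obtain ⟨m₀, hm₀⟩ := eventually_atTop.mp hbound.bound
  have hpos (m : ℕ+) : (0 : ℝ) < m := by exact_mod_cast m.pos
  refine ⟨C, hC, T / m₀, div_pos hT (hpos m₀), fun m hm => ?_⟩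
  have hle : m₀ ≤ m := by
    exact_mod_cast (div_le_div_iff_of_pos_left hT (hpos m) (hpos m₀)).mp hm
  calc f m ≤ ‖f m‖ := Real.le_norm_self _
    _ ≤ C * ‖T / (m : ℝ)‖ := hm₀ m hle
    _ = C * (T / (m : ℝ)) := by rw [Real.norm_of_nonneg (div_pos hT (hpos m)).le]

theorem isBigO_trace_mul_of_trace_le {α : Type*} {ι : α → Type*} [∀ a, Fintype (ι a)]
    {S : ∀ a, Matrix (ι a) (ι a) ℝ} (hS : ∀ a, (S a).PosSemidef) {M : ℝ}
    (hM : ∀ a, (S a).trace ≤ M) (f : α → ℝ) (l : Filter α) :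
    (fun a => (S a).trace * f a) =O[l] f :=
  .of_bound M <| .of_forall fun a => by
    rw [norm_mul, Real.norm_of_nonneg (hS a).trace_nonneg]
    gcongr
    exact hM a

open scoped ComplexOrder in
theorem trace_cov_isBigO_of_excitation_general {𝕜 α κ : Type*} [RCLike 𝕜] [Fintype κ]
    [DecidableEq κ] {ι : α → Type*} [∀ a, Fintype (ι a)] {l : Filter α} {c : α → 𝕜}
    {Φ : ∀ a, Matrix (ι a) κ 𝕜} {S : ∀ a, Matrix (ι a) (ι a) 𝕜} {R : Matrix κ κ 𝕜}
    (hS : ∀ᶠ a in l, (S a).PosSemidef) (hR : IsUnit R)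
    (hΦ : Tendsto (fun a => c a • ((Φ a)ᴴ * Φ a)) l (𝓝 R)) :
    (fun a => (leastSquaresCov (Φ a) (S a)).trace) =O[l] fun a => (S a).trace * c a := by
  have hle : ∀ᶠ a in l, ‖(leastSquaresCov (Φ a) (S a)).trace‖ ≤
      ‖(S a).trace * ((Φ a)ᴴ * Φ a)⁻¹.trace‖ := by
    filter_upwards [hS, eventually_isUnit_of_tendsto hR hΦ] with a hSa hunit
    have hgram : IsUnit ((Φ a)ᴴ * Φ a) := .of_mul_eq_one _ (mul_smul_inv_smul hunit)
    exact (norm_trace_leastSquaresCov_le hgram hSa).trans_eq (norm_mul _ _).symm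
  exact (Asymptotics.IsBigO.of_bound' hle).trans
    ((Asymptotics.isBigO_refl _ l).mul (isBigO_trace_inv_of_tendsto_smul hR hΦ))

/-- **Asymptotic covariance scaling with fast sampling.**
Admissible sampling intervals are `h = T_f / m` for positive integers `m`, so that
`N_h = T_f / h + 1 = m + 1`.  Under the excitation condition (A1) and the bounded total
noise energy condition (A2), the trace of the least-squares covariance matrix
`(Φ_hᵀΦ_h)⁻¹ Φ_hᵀ Σ_h Φ_h (Φ_hᵀΦ_h)⁻¹` is `O(h)` as `h → 0`. -/
theorem trace_cov_isBigO_of_excitation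
    (nθ : ℕ) (hnθ : 0 < nθ) (Tf : ℝ) (hTf : 0 < Tf)
    (Φ : (m : ℕ+) → Matrix (Fin (m + 1)) (Fin nθ) ℝ)
    (S : (m : ℕ+) → Matrix (Fin (m + 1)) (Fin (m + 1)) ℝ)
    (hinv : ∀ m : ℕ+, IsUnit ((Φ m)ᵀ * Φ m))
    (hpsd : ∀ m : ℕ+, (S m).PosSemidef)
    (R : Matrix (Fin nθ) (Fin nθ) ℝ) (hR : R.PosDef)
    (hA1 : Tendsto (fun m : ℕ+ => ((Tf / (m : ℝ)) / Tf) • ((Φ m)ᵀ * Φ m)) atTop (𝓝 R))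
    (M : ℝ) (hM : 0 < M) (hA2 : ∀ m : ℕ+, (S m).trace ≤ M) :
    ∃ C > (0 : ℝ), ∃ h₀ > (0 : ℝ), ∀ m : ℕ+, Tf / (m : ℝ) ≤ h₀ →
      (((Φ m)ᵀ * Φ m)⁻¹ * (Φ m)ᵀ * S m * Φ m * ((Φ m)ᵀ * Φ m)⁻¹).trace
        ≤ C * (Tf / (m : ℝ)) := by
  -- Over `ℝ` the star is the identity, so `ᴴ` unifies with `ᵀ` definitionally.
  refine exists_forall_le_mul_div_of_isBigO hTf <|
    (trace_cov_isBigO_of_excitation_general (.of_forall hpsd) hR.isUnit hA1).trans <|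
      (isBigO_trace_mul_of_trace_le hpsd hA2 _ _).trans ?_
  simpa only [div_eq_inv_mul] using
    Asymptotics.isBigO_const_mul_self Tf⁻¹ (fun m : ℕ+ => Tf / (m : ℝ)) atTop
end

section
/- Let T > 0 and let u : ℝ → ℝ be continuous with ∫₀^{T} u(t)² dt > 0. For h > 0 with T/h a positive integer, define the 2×2 Gram matrix G(h) with entries G(h)_{11} = h·Σ_{k=0}^{T/h} u(kh)², G(h)_{12} = G(h)_{21} = h·Σ_{k=0}^{T/h} u(kh)·u(kh − h), and G(h)_{22} = h·Σ_{k=0}^{T/h} u(kh − h)². Then as h → 0 (along admissible values), every entry of G(h) converges to ∫₀^{T} u(t)² dt, so G(h) converges to the singular matrix with all four entries equal to ∫₀^{T} u(t)² dt; in particular det G(h) → 0. Hence the scaled Gram matrix of a discrete-time regressor built from a signal and its one-sample-delayed copy does not converge to a positive definite matrix as the sampling interval tends to 0. -/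
open Matrix Filter Topology MeasureTheory

/-! Along a mesh `h → 0`, the samples at `k h` and at `k h - h` of a continuous signal differ
uniformly little, so every entry of the Gram matrix is a Riemann sum of `u ^ 2` up to a vanishing
error. Formally, `u (t - a h) * u (t - b h)` is jointly continuous in `(h, t)` and reduces to
`u t ^ 2` at `h = 0`, and a Riemann sum of mesh `h` of such a family converges to the integral of
its member at `h = 0`. -/

theorem exists_forall_dist_lt_of_continuous_uncurry {X Y Z : Type*} [PseudoMetricSpace X]
    [PseudoMetricSpace Y] [PseudoMetricSpace Z] {g : X → Y → Z}
    (hg : Continuous (Function.uncurry g)) (x₀ : X) {K : Set Y} (hK : IsCompact K)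
    {ε : ℝ} (hε : 0 < ε) :
    ∃ δ > 0, ∀ x y, ∀ t ∈ K, dist x x₀ < δ → dist y t < δ → dist (g x y) (g x₀ t) < ε := by
  have near_slice := (isCompact_singleton.prod hK).uniformContinuousAt_of_continuousAt
    (s := {x₀} ×ˢ K) (Function.uncurry g) (fun _ _ => hg.continuousAt)
    (Metric.dist_mem_uniformity hε)
  obtain ⟨δ, hδ, close⟩ := Metric.mem_uniformity_dist.1 near_slice
  refine ⟨δ, hδ, fun x y t ht hx hy => ?_⟩
  rw [dist_comm]
  refine close (a := (x₀, t)) (b := (x, y)) ?_ ⟨rfl, ht⟩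
  rw [dist_comm]
  exact max_lt hx hy

section RiemannSum

variable {E : Type*} [NormedAddCommGroup E] [NormedSpace ℝ E] [CompleteSpace E]

theorem norm_smul_sum_sub_integral_le {f : ℝ → E}
    (hf : ∀ a b : ℝ, IntervalIntegrable f volume a b)
    {h C : ℝ} (hh : 0 ≤ h) {m : ℕ} {c : ℕ → E}
    (hc : ∀ k < m, ∀ t ∈ Set.Ioc (k * h) (k * h + h), ‖c k - f t‖ ≤ C) :
    ‖h • ∑ k ∈ Finset.range m, c k - ∫ t in (0 : ℝ)..m * h, f t‖ ≤ m * (C * h) := by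
  have integral_eq_sum : ∫ t in (0 : ℝ)..m * h, f t =
      ∑ k ∈ Finset.range m, ∫ t in (k * h)..(k * h + h), f t := by
    have adjacent := intervalIntegral.sum_integral_adjacent_intervals (μ := volume) (n := m)
      (a := fun k : ℕ => k * h) fun _ _ => hf _ _
    simpa [add_one_mul] using adjacent.symm
  have cell_error : ∀ k ∈ Finset.range m,
      ‖h • c k - ∫ t in (k * h)..(k * h + h), f t‖ ≤ C * h := by
    intro k hk
    calc ‖h • c k - ∫ t in (k * h)..(k * h + h), f t‖
        = ‖∫ t in (k * h)..(k * h + h), (c k - f t)‖ := by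
          simp [intervalIntegral.integral_sub, hf]
      _ ≤ C * |k * h + h - k * h| := by
          refine intervalIntegral.norm_integral_le_of_norm_le_const fun t ht => ?_
          rw [Set.uIoc_of_le (le_add_of_nonneg_right hh)] at ht
          exact hc k (Finset.mem_range.1 hk) t ht
      _ = C * h := by rw [add_sub_cancel_left, abs_of_nonneg hh]
  rw [integral_eq_sum, Finset.smul_sum, ← Finset.sum_sub_distrib]
  simpa using norm_sum_le_of_le _ cell_error

theorem tendsto_riemannSum_unit {g : ℝ → ℝ → E} (hg : Continuous (Function.uncurry g)) :
    Tendsto (fun m : ℕ => (m : ℝ)⁻¹ • ∑ k ∈ Finset.range m, g (m : ℝ)⁻¹ (k * (m : ℝ)⁻¹))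
      atTop (𝓝 (∫ t in (0 : ℝ)..1, g 0 t)) := by
  rw [Metric.tendsto_nhds]
  intro ε hε
  obtain ⟨δ, hδ, close⟩ := exists_forall_dist_lt_of_continuous_uncurry hg 0
    (isCompact_Icc (a := (0 : ℝ)) (b := 1)) (half_pos hε)
  filter_upwards [tendsto_inv_atTop_nhds_zero_nat.eventually (Metric.ball_mem_nhds (0 : ℝ) hδ),
    eventually_gt_atTop 0] with m mesh_lt hm
  have m_pos : (0 : ℝ) < m := Nat.cast_pos.2 hm
  have mesh_pos : 0 < (m : ℝ)⁻¹ := inv_pos.2 m_pos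
  have cell_close : ∀ k < m, ∀ t ∈ Set.Ioc (k * (m : ℝ)⁻¹) (k * (m : ℝ)⁻¹ + (m : ℝ)⁻¹),
      ‖g (m : ℝ)⁻¹ (k * (m : ℝ)⁻¹) - g 0 t‖ ≤ ε / 2 := by
    intro k hk t ⟨ht_left, ht_right⟩
    have cell_le_one : k * (m : ℝ)⁻¹ + (m : ℝ)⁻¹ ≤ 1 := by
      rw [← add_one_mul, ← div_eq_mul_inv, div_le_one m_pos]
      exact_mod_cast hk
    have ht_nonneg : 0 ≤ t := (by positivity : 0 ≤ k * (m : ℝ)⁻¹).trans ht_left.le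
    have sample_near : dist (k * (m : ℝ)⁻¹) t < δ := by
      rw [dist_zero_right, Real.norm_of_nonneg mesh_pos.le] at mesh_lt
      rw [Real.dist_eq, abs_lt]
      constructor <;> linarith
    rw [← dist_eq_norm]
    exact (close _ _ t ⟨ht_nonneg, ht_right.trans cell_le_one⟩ mesh_lt sample_near).le
  have error_le := norm_smul_sum_sub_integral_le
    (hg.uncurry_left 0).intervalIntegrable mesh_pos.le cell_close
  rw [mul_inv_cancel₀ m_pos.ne', mul_left_comm, mul_inv_cancel₀ m_pos.ne', mul_one,
    ← dist_eq_norm] at error_le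
  exact error_le.trans_lt (half_lt_self hε)

theorem tendsto_riemannSum (T : ℝ) {g : ℝ → ℝ → E} (hg : Continuous (Function.uncurry g)) :
    Tendsto (fun m : ℕ => (T / m) • ∑ k ∈ Finset.range m, g (T / m) (k * (T / m)))
      atTop (𝓝 (∫ t in (0 : ℝ)..T, g 0 t)) := by
  have rescaled := tendsto_riemannSum_unit (g := fun h t => g (h * T) (t * T))
    (by change Continuous fun p : ℝ × ℝ => Function.uncurry g (p.1 * T, p.2 * T); fun_prop)
  convert rescaled.const_smul T using 2 with m
  · simp only [smul_smul, div_eq_inv_mul, mul_comm T, mul_assoc]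
  · simp [intervalIntegral.smul_integral_comp_mul_right (g 0)]

theorem tendsto_riemannSum_succ (T : ℝ) {g : ℝ → ℝ → E} (hg : Continuous (Function.uncurry g)) :
    Tendsto (fun m : ℕ => (T / m) • ∑ k ∈ Finset.range (m + 1), g (T / m) (k * (T / m)))
      atTop (𝓝 (∫ t in (0 : ℝ)..T, g 0 t)) := by
  have mesh_tendsto : Tendsto (fun m : ℕ => T / m) atTop (𝓝 0) :=
    tendsto_const_div_atTop_nhds_zero_nat T
  have last_term : Tendsto (fun m : ℕ => (T / m) • g (T / m) T) atTop (𝓝 0) := by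
    simpa using mesh_tendsto.smul (((hg.uncurry_right T).tendsto 0).comp mesh_tendsto)
  rw [← add_zero (∫ t in (0 : ℝ)..T, g 0 t)]
  refine ((tendsto_riemannSum T hg).add last_term).congr' ?_
  filter_upwards [eventually_ne_atTop 0] with m hm
  rw [Finset.sum_range_succ, smul_add, mul_div_cancel₀ T (Nat.cast_ne_zero.2 hm)]

end RiemannSum

section DelayGram

variable {ι : Type*}

/-- The regressor matrix of the signal `u` sampled at `0, h, …, m h`: its column `i` is `u` delayed
by `d i` sampling intervals, where `d i` need not be an integer. -/
def delayRegressor (u : ℝ → ℝ) (d : ι → ℝ) (h : ℝ) (m : ℕ) : Matrix (Fin (m + 1)) ι ℝ :=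
  Matrix.of fun k i => u (k * h - d i * h)

/-- The scaled Gram matrix `h Φᵀ Φ` of the regressor matrix `Φ`. For `h = T / m` it is `T` times
the matrix `(h / T) Φᵀ Φ` of the excitation condition. -/
def delayGram (u : ℝ → ℝ) (d : ι → ℝ) (h : ℝ) (m : ℕ) : Matrix ι ι ℝ :=
  h • ((delayRegressor u d h m)ᵀ * delayRegressor u d h m)

theorem delayGram_apply (u : ℝ → ℝ) (d : ι → ℝ) (h : ℝ) (m : ℕ) (i j : ι) :
    delayGram u d h m i j =
      h * ∑ k ∈ Finset.range (m + 1), u (k * h - d i * h) * u (k * h - d j * h) := by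
  simp [delayGram, delayRegressor, Matrix.mul_apply, Finset.sum_range]

theorem delayGram_zero_one (u : ℝ → ℝ) (h : ℝ) (m : ℕ) :
    delayGram u ![0, 1] h m =
      !![h * ∑ k ∈ Finset.range (m + 1), u (k * h) ^ 2,
         h * ∑ k ∈ Finset.range (m + 1), u (k * h) * u (k * h - h);
         h * ∑ k ∈ Finset.range (m + 1), u (k * h) * u (k * h - h),
         h * ∑ k ∈ Finset.range (m + 1), u (k * h - h) ^ 2] := by
  ext i j
  fin_cases i <;> fin_cases j <;> simp [delayGram_apply, pow_two, mul_comm (u (_ - h))]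

theorem tendsto_delayGram (T : ℝ) {u : ℝ → ℝ} (hu : Continuous u) (d : ι → ℝ) :
    Tendsto (fun m : ℕ => delayGram u d (T / m) m) atTop
      (𝓝 (Matrix.of fun _ _ => ∫ t in (0 : ℝ)..T, u t ^ 2)) := by
  refine tendsto_pi_nhds.2 fun i => tendsto_pi_nhds.2 fun j => ?_
  have products_continuous :
      Continuous (Function.uncurry fun h t => u (t - d i * h) * u (t - d j * h)) := by
    fun_prop
  simpa [delayGram_apply, pow_two] using tendsto_riemannSum_succ T products_continuous

theorem delayed_regressor_gram_tendsto_singular_general [Fintype ι] [DecidableEq ι] [Nontrivial ι]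
    (T : ℝ) {u : ℝ → ℝ} (hu : Continuous u) (d : ι → ℝ) :
    Tendsto (fun m : ℕ => delayGram u d (T / m) m) atTop
      (𝓝 (Matrix.of fun _ _ => ∫ t in (0 : ℝ)..T, u t ^ 2)) ∧
    Tendsto (fun m : ℕ => (delayGram u d (T / m) m).det) atTop (𝓝 0) := by
  refine ⟨tendsto_delayGram T hu d, ?_⟩
  obtain ⟨i, j, hij⟩ := exists_pair_ne ι
  rw [← Matrix.det_zero_of_row_eq hij (M := Matrix.of fun _ _ => ∫ t in (0 : ℝ)..T, u t ^ 2) rfl]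
  exact (continuous_id.matrix_det.tendsto _).comp (tendsto_delayGram T hu d)

end DelayGram

/-- **Failure of the excitation condition for discrete-time regressors.**
For a continuous signal `u` with `∫₀ᵀ u² > 0`, the scaled 2×2 Gram matrix `G(h)` built
from the signal and its one-sample-delayed copy (sampled at `h = T/m`) converges entrywise
to the singular matrix all of whose entries equal `∫₀ᵀ u(t)² dt`; in particular
`det G(h) → 0`, so `G(h)` does not converge to a positive definite matrix as `h → 0`. -/
theorem delayed_regressor_gram_tendsto_singular
    (T : ℝ) (hT : 0 < T) (u : ℝ → ℝ) (hu : Continuous u)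
    (hpos : 0 < ∫ t in (0 : ℝ)..T, u t ^ 2)
    (G : ℕ+ → Matrix (Fin 2) (Fin 2) ℝ)
    (hG : ∀ m : ℕ+, G m =
      !![(T / (m : ℝ)) * ∑ k ∈ Finset.range ((m : ℕ) + 1),
            u ((k : ℝ) * (T / (m : ℝ))) ^ 2,
         (T / (m : ℝ)) * ∑ k ∈ Finset.range ((m : ℕ) + 1),
            u ((k : ℝ) * (T / (m : ℝ))) * u ((k : ℝ) * (T / (m : ℝ)) - T / (m : ℝ));
         (T / (m : ℝ)) * ∑ k ∈ Finset.range ((m : ℕ) + 1),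
            u ((k : ℝ) * (T / (m : ℝ))) * u ((k : ℝ) * (T / (m : ℝ)) - T / (m : ℝ)),
         (T / (m : ℝ)) * ∑ k ∈ Finset.range ((m : ℕ) + 1),
            u ((k : ℝ) * (T / (m : ℝ)) - T / (m : ℝ)) ^ 2]) :
    Tendsto G atTop
      (𝓝 (Matrix.of fun _ _ : Fin 2 => ∫ t in (0 : ℝ)..T, u t ^ 2)) ∧
    Tendsto (fun m : ℕ+ => (G m).det) atTop (𝓝 0) := by
  obtain rfl : G = fun m : ℕ+ => delayGram u ![0, 1] (T / (m : ℝ)) m :=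
    funext fun m => (hG m).trans (delayGram_zero_one u (T / (m : ℝ)) m).symm
  exact (delayed_regressor_gram_tendsto_singular_general T hu ![0, 1]).imp
    (·.comp tendsto_PNat_val_atTop_atTop) (·.comp tendsto_PNat_val_atTop_atTop)
end
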